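/- Consider the inverted pendulum cart on a seesaw: mass matrix on ℝ³ given by g₁₁ = b + (x³)², g₁₂ = a x³ sin(x¹ − x²), g₁₃ = 0, g₂₂ = 1, g₂₃ = −a cos(x¹ − x²), g₃₃ = 1, with parameters a, b > 0. Let U ⊆ {x ∈ ℝ³ : sin(x¹ − x²) ≠ 0 and x³ ≠ 0} be open. A smooth λ = (λ¹,λ²,λ³) : U → ℝ³ satisfies the λ-equations ∂(g_{1i}λ^i)/∂x^k − 2[k1,i]λ^i = 0 (k = 1,2,3) if and only if the function ν := g_{1i}λ^i satisfies ∂ν/∂x² = 0 and: λ¹ = (2ν − x³ ∂ν/∂x³)/(2b), λ² = (−2x³ ν + (b + (x³)²) ∂ν/∂x³)/(2ab sin(x¹ − x²)), and λ³ = a cos(x¹ − x²) λ² − (∂ν/∂x¹)/(2x³). -/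

import Mathlib

/-- Partial derivative in the `k`-th coordinate direction. -/
noncomputable def pd {n : ℕ} (k : Fin n) (f : (Fin n → ℝ) → ℝ) (x : Fin n → ℝ) : ℝ :=
  fderiv ℝ f x (Pi.single k 1)

/-- Christoffel symbol of the first kind `[ij,k]` of the matrix-valued map `g`. -/
noncomputable def chr {n : ℕ} (g : (Fin n → ℝ) → Matrix (Fin n) (Fin n) ℝ)
    (i j k : Fin n) (x : Fin n → ℝ) : ℝ :=
  (1/2) * (pd i (fun y => g y j k) x + pd j (fun y => g y i k) x - pd k (fun y => g y i j) x)

/-- Mass matrix of the inverted pendulum cart on a seesaw. -/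
noncomputable def gSeesaw (a b : ℝ) (x : Fin 3 → ℝ) : Matrix (Fin 3) (Fin 3) ℝ :=
  !![b + (x 2)^2, a * x 2 * Real.sin (x 0 - x 1), 0;
     a * x 2 * Real.sin (x 0 - x 1), 1, -a * Real.cos (x 0 - x 1);
     0, -a * Real.cos (x 0 - x 1), 1]

/-- `ν = g_{1i} λ^i` for the seesaw system. -/
noncomputable def nuSeesaw (a b : ℝ) (lam : (Fin 3 → ℝ) → Fin 3 → ℝ)
    (x : Fin 3 → ℝ) : ℝ :=
  ∑ i, gSeesaw a b x 0 i * lam x i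

/-!
The differential of `ν` enters the `λ`-equations only through its components, so at each point they
are algebraic equations in `λ` and `dν`. For the seesaw they read `∂ν/∂x² = 0`,
`∂ν/∂x³ = 2x³λ¹ + 2a sin(x¹ − x²)λ²` and `∂ν/∂x¹ = 2x³(a cos(x¹ − x²)λ² − λ³)`. The second one,
together with the definition of `ν`, is a linear system for `(λ¹, λ²)` with determinant
`2ab sin(x¹ − x²)`; the third one then gives `λ³`.
-/

section CoordinateDerivatives

variable {ι : Type*} (i j : ι) (x v : ι → ℝ)

theorem fderiv_coord_apply : fderiv ℝ (fun y : ι → ℝ => y i) x v = v i := by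
  rw [(hasFDerivAt_apply i x).fderiv, ContinuousLinearMap.proj_apply]

variable [Finite ι]

theorem fderiv_sin_coord_sub_apply :
    fderiv ℝ (fun y : ι → ℝ => Real.sin (y i - y j)) x v =
      Real.cos (x i - x j) * (v i - v j) := by
  have := Fintype.ofFinite ι
  rw [fderiv_sin (by fun_prop), fderiv_fun_sub (by fun_prop) (by fun_prop)]
  simp [fderiv_coord_apply]

theorem fderiv_cos_coord_sub_apply :
    fderiv ℝ (fun y : ι → ℝ => Real.cos (y i - y j)) x v =
      -Real.sin (x i - x j) * (v i - v j) := by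
  have := Fintype.ofFinite ι
  rw [fderiv_cos (by fun_prop), fderiv_fun_sub (by fun_prop) (by fun_prop)]
  simp [fderiv_coord_apply]

end CoordinateDerivatives

theorem fderiv_gSeesaw_apply (a b : ℝ) (k l : Fin 3) (x v : Fin 3 → ℝ) :
    fderiv ℝ (fun y => gSeesaw a b y k l) x v =
      let θ := x 0 - x 1
      let dθ := v 0 - v 1
      let dg₁₂ := a * (x 2 * Real.cos θ * dθ + v 2 * Real.sin θ)
      let dg₂₃ := a * Real.sin θ * dθ
      !![2 * x 2 * v 2, dg₁₂, 0;
         dg₁₂, 0, dg₂₃;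
         0, dg₂₃, 0] k l := by
  have hconst (c : ℝ) : fderiv ℝ (fun _ : Fin 3 → ℝ => c) x v = 0 := by
    rw [fderiv_fun_const, Pi.zero_apply, zero_apply]
  have h₁₁ : fderiv ℝ (fun y : Fin 3 → ℝ => b + (y 2)^2) x v = 2 * x 2 * v 2 := by
    rw [fderiv_const_add, fderiv_fun_pow 2 (by fun_prop)]
    simp [fderiv_coord_apply]
  have h₁₂ : fderiv ℝ (fun y : Fin 3 → ℝ => a * y 2 * Real.sin (y 0 - y 1)) x v =
      a * (x 2 * Real.cos (x 0 - x 1) * (v 0 - v 1) + v 2 * Real.sin (x 0 - x 1)) := by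
    rw [fderiv_fun_mul (by fun_prop) (by fun_prop), fderiv_const_mul (by fun_prop)]
    simp only [add_apply, smul_apply, smul_eq_mul, fderiv_coord_apply,
      fderiv_sin_coord_sub_apply]
    ring
  have h₂₃ : fderiv ℝ (fun y : Fin 3 → ℝ => -a * Real.cos (y 0 - y 1)) x v =
      a * Real.sin (x 0 - x 1) * (v 0 - v 1) := by
    rw [fderiv_const_mul (by fun_prop), smul_apply,
      fderiv_cos_coord_sub_apply, smul_eq_mul]
    ring
  fin_cases k <;> fin_cases l
  exacts [h₁₁, h₁₂, hconst 0, h₁₂, hconst 1, h₂₃, hconst 0, h₂₃, hconst 1]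

theorem chr_gSeesaw_zero (a b : ℝ) (k i : Fin 3) (x : Fin 3 → ℝ) :
    chr (gSeesaw a b) k 0 i x =
      !![0, a * x 2 * Real.cos (x 0 - x 1), -x 2;
         0, 0, 0;
         x 2, a * Real.sin (x 0 - x 1), 0] k i := by
  simp only [chr, pd, fderiv_gSeesaw_apply]
  fin_cases k <;> fin_cases i <;> simp <;> ring

theorem seesaw_lambda_equations_iff (a b : ℝ) (x l p : Fin 3 → ℝ) :
    (∀ k, p k - 2 * ∑ i, chr (gSeesaw a b) k 0 i x * l i = 0) ↔
      p 0 = 2 * x 2 * (a * Real.cos (x 0 - x 1) * l 1 - l 2) ∧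
      p 1 = 0 ∧
      2 * x 2 * l 0 + 2 * a * Real.sin (x 0 - x 1) * l 1 = p 2 := by
  have hrows : (∀ k, p k - 2 * ∑ i, chr (gSeesaw a b) k 0 i x * l i = 0) ↔
      p 0 - 2 * (a * x 2 * Real.cos (x 0 - x 1) * l 1 - x 2 * l 2) = 0 ∧
      p 1 = 0 ∧
      p 2 - 2 * (x 2 * l 0 + a * Real.sin (x 0 - x 1) * l 1) = 0 := by
    simp [chr_gSeesaw_zero, Fin.forall_fin_succ, Fin.sum_univ_three, ← sub_eq_add_neg]
  rw [hrows]
  grind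

theorem linear_system_two_iff {K : Type*} [Field K] {α β γ δ u v x y : K}
    (hdet : α * δ - β * γ ≠ 0) :
    (α * x + β * y = u ∧ γ * x + δ * y = v) ↔
      x = (u * δ - β * v) / (α * δ - β * γ) ∧ y = (α * v - γ * u) / (α * δ - β * γ) := by
  rw [eq_div_iff hdet, eq_div_iff hdet]
  constructor
  · rintro ⟨hu, hv⟩
    exact ⟨by linear_combination δ * hu - β * hv, by linear_combination α * hv - γ * hu⟩
  · rintro ⟨hx, hy⟩
    exact ⟨mul_right_cancel₀ hdet (by linear_combination α * hx + β * hy),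
      mul_right_cancel₀ hdet (by linear_combination γ * hx + δ * hy)⟩

/-- The arguments `l` and `p` stand for the values at `x` of `λ` and of the differential of `ν`. -/
theorem seesaw_lambda_characterization_general {a b : ℝ} (ha : a ≠ 0) (hb : b ≠ 0)
    {x : Fin 3 → ℝ} (hsin : Real.sin (x 0 - x 1) ≠ 0) (hx : x 2 ≠ 0) (l p : Fin 3 → ℝ)
    {ν : ℝ} (hν : ν = ∑ i, gSeesaw a b x 0 i * l i) :
    (∀ k, p k - 2 * ∑ i, chr (gSeesaw a b) k 0 i x * l i = 0) ↔
      p 1 = 0 ∧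
      l 0 = (2 * ν - x 2 * p 2) / (2 * b) ∧
      l 1 = (-2 * x 2 * ν + (b + (x 2)^2) * p 2) / (2 * a * b * Real.sin (x 0 - x 1)) ∧
      l 2 = a * Real.cos (x 0 - x 1) * l 1 - p 0 / (2 * x 2) := by
  have hν' : (b + (x 2)^2) * l 0 + a * x 2 * Real.sin (x 0 - x 1) * l 1 = ν := by
    simp [hν, gSeesaw, Fin.sum_univ_three]
  have hdet : (b + (x 2)^2) * (2 * a * Real.sin (x 0 - x 1)) -
      a * x 2 * Real.sin (x 0 - x 1) * (2 * x 2) = 2 * a * b * Real.sin (x 0 - x 1) := by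
    ring
  have hdet0 : 2 * a * b * Real.sin (x 0 - x 1) ≠ 0 := by simp [ha, hb, hsin]
  have hl₀₁ : 2 * x 2 * l 0 + 2 * a * Real.sin (x 0 - x 1) * l 1 = p 2 ↔
      l 0 = (2 * ν - x 2 * p 2) / (2 * b) ∧
      l 1 = (-2 * x 2 * ν + (b + (x 2)^2) * p 2) / (2 * a * b * Real.sin (x 0 - x 1)) := by
    have cramer := linear_system_two_iff (x := l 0) (y := l 1) (u := ν) (v := p 2) (hdet ▸ hdet0)
    rw [and_iff_right hν', hdet] at cramer
    convert cramer using 3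
    · field_simp
    · ring
  have hl₂ : p 0 = 2 * x 2 * (a * Real.cos (x 0 - x 1) * l 1 - l 2) ↔
      l 2 = a * Real.cos (x 0 - x 1) * l 1 - p 0 / (2 * x 2) := by
    rw [eq_sub_iff_add_eq', ← eq_sub_iff_add_eq, div_eq_iff (mul_ne_zero two_ne_zero hx),
      mul_comm (2 * x 2)]
  rw [seesaw_lambda_equations_iff, hl₀₁, hl₂]
  tauto

/-- Characterization of all solutions to the λ-equations for the inverted
pendulum cart on a seesaw, away from `sin(x¹−x²) = 0` and `x³ = 0`. -/
theorem seesaw_lambda_characterization (a b : ℝ) (ha : 0 < a) (hb : 0 < b)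
    (U : Set (Fin 3 → ℝ)) (hUopen : IsOpen U)
    (hU : U ⊆ {x : Fin 3 → ℝ | Real.sin (x 0 - x 1) ≠ 0 ∧ x 2 ≠ 0})
    (lam : (Fin 3 → ℝ) → Fin 3 → ℝ)
    (hlam : ∀ i, ContDiffOn ℝ (⊤ : ℕ∞) (fun x => lam x i) U) :
    -- λ satisfies the λ-equations on U …
    (∀ x ∈ U, ∀ k : Fin 3,
        pd k (fun y => ∑ i, gSeesaw a b y 0 i * lam y i) x
          - 2 * ∑ i, chr (gSeesaw a b) k 0 i x * lam x i = 0)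
    ↔
    -- … iff ∂ν/∂x² = 0 and the explicit formulas for λ¹, λ², λ³ hold
    (∀ x ∈ U,
        pd 1 (nuSeesaw a b lam) x = 0 ∧
        lam x 0 = (2 * nuSeesaw a b lam x - x 2 * pd 2 (nuSeesaw a b lam) x) / (2 * b) ∧
        lam x 1 = (-2 * x 2 * nuSeesaw a b lam x
            + (b + (x 2)^2) * pd 2 (nuSeesaw a b lam) x)
            / (2 * a * b * Real.sin (x 0 - x 1)) ∧
        lam x 2 = a * Real.cos (x 0 - x 1) * lam x 1
            - pd 0 (nuSeesaw a b lam) x / (2 * x 2)) :=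
  forall₂_congr fun x hx =>
    seesaw_lambda_characterization_general ha.ne' hb.ne' (hU hx).1 (hU hx).2 (lam x)
      (fun k => pd k (nuSeesaw a b lam) x) rfl
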